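/- arXiv:2509.04375 — 2 statements merged into one kernel-verified Lean document; each statement's English description precedes it below -/
import Mathlib

section
/- Let h : ℝ^n → ℝ be lower semicontinuous and (κ,γ)-strongly quasar-convex with κ ∈ (0,1] and γ > 0, with unique minimizer x̄ ∈ argmin_{ℝ^n} h, and suppose x̄ satisfies the quadratic-growth inequality h(x̄) + (κγ/(2(2−κ)))·‖y − x̄‖² ≤ h(y) for all y. Let {β_k} be a sequence with β_k ≥ β' > 0 for all k, and let {x^k} satisfy x^{k+1} ∈ Prox_{β_k h}(x^k) for all k ≥ 0. Then: (i) h(x^{k+1}) ≤ h(x^k) for all k; (ii) ‖x^{k+1} − x̄‖² ≤ ‖x^k − x̄‖² / (1 + κβ'γ + κ²β'γ/(2−κ)) for all k, hence ‖x^k − x̄‖ ≤ μ^k·‖x^0 − x̄‖ with μ := (1 + κβ'γ + κ²β'γ/(2−κ))^{−1/2} ∈ (0,1), so x^k converges linearly to x̄; and (iii) h(x^k) converges to min_{x∈ℝ^n} h(x). -/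
open Set Filter Topology

/-- `h` is (κ,γ)-strongly quasar-convex (on all of the space) with respect to `x̄`. -/
def StronglyQuasarConvex {n : ℕ} (h : EuclideanSpace ℝ (Fin n) → ℝ) (κ γ : ℝ)
    (xbar : EuclideanSpace ℝ (Fin n)) : Prop :=
  ∀ x : EuclideanSpace ℝ (Fin n), ∀ l ∈ Icc (0:ℝ) 1,
    h (l • xbar + (1 - l) • x) ≤ κ * l * h xbar + (1 - κ * l) * h x
      - l * (1 - l / (2 - κ)) * (κ * γ / 2) * ‖x - xbar‖ ^ 2

/-- The proximity operator `Prox_{βh}(z)` of `h` on all of the space with parameter `β`. -/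
def Prox {n : ℕ} (β : ℝ) (h : EuclideanSpace ℝ (Fin n) → ℝ)
    (z : EuclideanSpace ℝ (Fin n)) : Set (EuclideanSpace ℝ (Fin n)) :=
  {x | ∀ y, h x + 1 / (2 * β) * ‖z - x‖ ^ 2 ≤ h y + 1 / (2 * β) * ‖z - y‖ ^ 2}

theorem aux_limit (A B : ℝ) (H : ∀ l : ℝ, 0 < l → l ≤ 1 → 0 ≤ A + l * B) : 0 ≤ A := by
  have h1 : Tendsto (fun l : ℝ => A + l * B) (𝓝[>] 0) (𝓝 (A + 0 * B)) := by
    apply Tendsto.mono_left _ nhdsWithin_le_nhds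
    exact Continuous.tendsto (by fun_prop) 0
  have h2 := ge_of_tendsto h1 (b := 0) (by
    filter_upwards [Ioc_mem_nhdsGT (zero_lt_one' ℝ)] with l hl
    exact H l hl.1 hl.2)
  simpa using h2

theorem aux_key {n : ℕ} (h : EuclideanSpace ℝ (Fin n) → ℝ) (κ γ b : ℝ) (hb : 0 < b)
    (xbar z p : EuclideanSpace ℝ (Fin n)) (hq : StronglyQuasarConvex h κ γ xbar)
    (hp : p ∈ Prox b h z) :
    2 * b * κ * (h p - h xbar) + (1 + κ * b * γ) * ‖p - xbar‖ ^ 2 ≤ ‖z - xbar‖ ^ 2 := by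
  have e0 : ‖z - xbar‖ ^ 2 = ‖z - p‖ ^ 2 + 2 * inner ℝ (z - p) (p - xbar) + ‖p - xbar‖ ^ 2 := by
    rw [← norm_add_sq_real]; congr 2; abel
  have key := aux_limit
    (2 * inner ℝ (z - p) (p - xbar) - 2 * b * κ * (h p - h xbar) - κ * b * γ * ‖p - xbar‖ ^ 2)
    (‖p - xbar‖ ^ 2 + 1 / (2 - κ) * κ * b * γ * ‖p - xbar‖ ^ 2) (by
      intro l hl hl1
      have q := hq p l ⟨hl.le, hl1⟩
      have r := hp (l • xbar + (1 - l) • p)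
      have e1 : ‖z - (l • xbar + (1 - l) • p)‖ ^ 2
          = ‖z - p‖ ^ 2 + 2 * (l * inner ℝ (z - p) (p - xbar)) + l ^ 2 * ‖p - xbar‖ ^ 2 := by
        have : z - (l • xbar + (1 - l) • p) = (z - p) + l • (p - xbar) := by module
        rw [this, norm_add_sq_real, inner_smul_right, norm_smul, mul_pow, Real.norm_eq_abs, sq_abs]
      rw [e1] at r
      have r2 := mul_le_mul_of_nonneg_left (r.trans (add_le_add_left q _)) (by positivity : 0 ≤ 2 * b)
      have hbb : 2 * b * (1 / (2 * b)) = 1 := by field_simp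
      have c : ∀ u w : ℝ, 2 * b * (u + 1 / (2 * b) * w) = 2 * b * u + w := by
        intro u w; rw [mul_add, ← mul_assoc, hbb, one_mul]
      rw [c, c] at r2
      by_contra hneg
      push Not at hneg
      have := mul_neg_of_pos_of_neg hl hneg
      rw [div_eq_mul_one_div l] at r2
      nlinarith)
  nlinarith

theorem stmt_17 {n : ℕ} (h : EuclideanSpace ℝ (Fin n) → ℝ)
    (hlsc : LowerSemicontinuous h)
    (κ γ : ℝ) (hκ : κ ∈ Ioc (0:ℝ) 1) (hγ : 0 < γ)
    (xbar : EuclideanSpace ℝ (Fin n)) (hxbar : ∀ y, h xbar ≤ h y)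
    (huniq : ∀ y, (∀ z, h y ≤ h z) → y = xbar)
    (hq : StronglyQuasarConvex h κ γ xbar)
    (hgrowth : ∀ y, h xbar + κ * γ / (2 * (2 - κ)) * ‖y - xbar‖ ^ 2 ≤ h y)
    (β : ℕ → ℝ) (β' : ℝ) (hβ' : 0 < β') (hβ : ∀ k, β' ≤ β k)
    (x : ℕ → EuclideanSpace ℝ (Fin n))
    (hiter : ∀ k : ℕ, x (k + 1) ∈ Prox (β k) h (x k)) :
    (∀ k : ℕ, h (x (k + 1)) ≤ h (x k)) ∧
    (∀ k : ℕ, ‖x (k + 1) - xbar‖ ^ 2 ≤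
        ‖x k - xbar‖ ^ 2 / (1 + κ * β' * γ + κ ^ 2 * β' * γ / (2 - κ))) ∧
    (1 / Real.sqrt (1 + κ * β' * γ + κ ^ 2 * β' * γ / (2 - κ)) ∈ Ioo (0:ℝ) 1 ∧
      ∀ k : ℕ, ‖x k - xbar‖ ≤
        (1 / Real.sqrt (1 + κ * β' * γ + κ ^ 2 * β' * γ / (2 - κ))) ^ k * ‖x 0 - xbar‖) ∧
    Tendsto x atTop (𝓝 xbar) ∧
    Tendsto (fun k => h (x k)) atTop (𝓝 (h xbar)) := by
  obtain ⟨hκ0, hκ1⟩ := hκ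
  have h2κ : 0 < 2 - κ := by linarith
  have hbp : ∀ k, 0 < β k := fun k => hβ'.trans_le (hβ k)
  have key := fun k => aux_key h κ γ (β k) (hbp k) xbar (x k) (x (k + 1)) hq (hiter k)
  set C := 1 + κ * β' * γ + κ ^ 2 * β' * γ / (2 - κ) with hC
  have hC1 : 1 < C := by
    have h1 : 0 < κ * β' * γ := by positivity
    have h2 : 0 < κ ^ 2 * β' * γ / (2 - κ) := by positivity
    linarith
  have hC0 : 0 < C := by linarith
  have hs1 : 1 < Real.sqrt C := by rw [Real.lt_sqrt] <;> linarith
  have hs0 : 0 < Real.sqrt C := by linarith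
  have hmu : 1 / Real.sqrt C ∈ Ioo (0:ℝ) 1 := ⟨by positivity, by rw [div_lt_one hs0]; exact hs1⟩
  have hii : ∀ k : ℕ, ‖x (k + 1) - xbar‖ ^ 2 ≤ ‖x k - xbar‖ ^ 2 / C := by
    intro k
    rw [le_div_iff₀ hC0]
    refine le_trans ?_ (key k)
    have g := hgrowth (x (k + 1))
    have hb := hbp k
    have g2 : 2 * β k * κ * (κ * γ / (2 * (2 - κ)) * ‖x (k + 1) - xbar‖ ^ 2)
        ≤ 2 * β k * κ * (h (x (k + 1)) - h xbar) :=
      mul_le_mul_of_nonneg_left (by linarith) (by positivity)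
    have e : 2 * β k * κ * (κ * γ / (2 * (2 - κ)) * ‖x (k + 1) - xbar‖ ^ 2)
        = κ ^ 2 * β k * γ / (2 - κ) * ‖x (k + 1) - xbar‖ ^ 2 := by
      field_simp
    have hCk : C ≤ 1 + κ * β k * γ + κ ^ 2 * β k * γ / (2 - κ) := by
      rw [hC]
      have := hβ k
      gcongr
    have := mul_le_mul_of_nonneg_left hCk (sq_nonneg ‖x (k + 1) - xbar‖)
    nlinarith
  have hlin : ∀ k : ℕ, ‖x k - xbar‖ ≤ (1 / Real.sqrt C) ^ k * ‖x 0 - xbar‖ := by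
    intro k
    induction k with
    | zero => simp
    | succ k ih =>
      have h1 : ‖x (k + 1) - xbar‖ ≤ 1 / Real.sqrt C * ‖x k - xbar‖ := by
        refine (sq_le_sq₀ (norm_nonneg _) (by positivity)).1 ?_
        rw [mul_pow, div_pow, Real.sq_sqrt hC0.le]
        refine (hii k).trans (le_of_eq ?_)
        ring
      calc _ ≤ _ := h1
        _ ≤ 1 / Real.sqrt C * ((1 / Real.sqrt C) ^ k * ‖x 0 - xbar‖) := by gcongr
        _ = _ := by ring
  have hn : Tendsto (fun k => ‖x k - xbar‖) atTop (𝓝 0) := by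
    refine squeeze_zero (fun _ => norm_nonneg _) hlin ?_
    simpa using (tendsto_pow_atTop_nhds_zero_of_lt_one hmu.1.le hmu.2).mul_const ‖x 0 - xbar‖
  refine ⟨?_, hii, ⟨hmu, hlin⟩, tendsto_iff_norm_sub_tendsto_zero.2 hn, ?_⟩
  · intro k
    have r := hiter k (x k)
    have hb := hbp k
    have : 0 ≤ 1 / (2 * β k) * ‖x k - x (k + 1)‖ ^ 2 := by positivity
    simp only [sub_self, norm_zero] at r
    linarith
  · rw [← tendsto_add_atTop_iff_nat 1]
    have hup : Tendsto (fun k => h xbar + 1 / (2 * β' * κ) * ‖x k - xbar‖ ^ 2) atTop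
        (𝓝 (h xbar)) := by
      simpa using ((hn.pow 2).const_mul (1 / (2 * β' * κ))).const_add (h xbar)
    refine tendsto_of_tendsto_of_tendsto_of_le_of_le tendsto_const_nhds hup
      (fun k => hxbar _) (fun k => ?_)
    have hb := hbp k
    have hnn : 0 ≤ h (x (k + 1)) - h xbar := by linarith [hxbar (x (k + 1))]
    have h1 : 2 * β' * κ * (h (x (k + 1)) - h xbar) ≤ 2 * β k * κ * (h (x (k + 1)) - h xbar) := by
      have := hβ k
      gcongr
    have h2 : 0 ≤ (1 + κ * β k * γ) * ‖x (k + 1) - xbar‖ ^ 2 := by positivity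
    have h3 : h (x (k + 1)) - h xbar ≤ ‖x k - xbar‖ ^ 2 / (2 * β' * κ) := by
      rw [le_div_iff₀ (by positivity)]
      linarith [key k]
    have h4 : 1 / (2 * β' * κ) * ‖x k - xbar‖ ^ 2 = ‖x k - xbar‖ ^ 2 / (2 * β' * κ) := by ring
    show h (x (k + 1)) ≤ _
    linarith
end

section
/- Let h : ℝ^n → ℝ be lower semicontinuous and κ-quasar-convex with respect to a minimizer x̄ ∈ argmin_{ℝ^n} h, with κ ∈ (0,1]. Let {β_k} be a sequence with β_k ≥ β' > 0 for all k, and let {x^k} satisfy x^{k+1} ∈ Prox_{β_k h}(x^k) for all k ≥ 0. Then for every N ≥ 1, h(x^N) − h(x̄) ≤ ‖x^0 − x̄‖² / (2κβ'N). -/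
open Set

/-- `h` is κ-quasar-convex (on all of the space) with respect to `x̄`. -/
def QuasarConvex {n : ℕ} (h : EuclideanSpace ℝ (Fin n) → ℝ) (κ : ℝ)
    (xbar : EuclideanSpace ℝ (Fin n)) : Prop :=
  ∀ x : EuclideanSpace ℝ (Fin n), ∀ l ∈ Icc (0:ℝ) 1,
    h (l • xbar + (1 - l) • x) ≤ κ * l * h xbar + (1 - κ * l) * h x

theorem prox_step {n : ℕ} (h : EuclideanSpace ℝ (Fin n) → ℝ) (κ : ℝ)
    (xbar : EuclideanSpace ℝ (Fin n)) (hq : QuasarConvex h κ xbar)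
    (β : ℝ) (hβ : 0 < β) (z p : EuclideanSpace ℝ (Fin n)) (hp : p ∈ Prox β h z) :
    2 * β * κ * (h p - h xbar) ≤ ‖z - xbar‖ ^ 2 - ‖p - xbar‖ ^ 2 := by
  have key : ∀ l ∈ Icc (0:ℝ) 1,
      l * (2 * β * κ * (h p - h xbar) + 2 * inner ℝ (z - p) (xbar - p))
        ≤ l * (l * ‖xbar - p‖ ^ 2) := by
    intro l hl
    have h1 := hp (l • xbar + (1 - l) • p)
    have h2 := hq p l hl
    have e : z - (l • xbar + (1 - l) • p) = (z - p) - l • (xbar - p) := by module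
    rw [e, norm_sub_sq_real (z - p) (l • (xbar - p)), inner_smul_right, norm_smul, mul_pow, Real.norm_eq_abs, sq_abs] at h1
    have h3 : κ * l * (h p - h xbar) ≤ 1 / (2 * β) *
        (-2 * (l * inner ℝ (z - p) (xbar - p)) + l ^ 2 * ‖xbar - p‖ ^ 2) := by linarith
    rw [one_div_mul_eq_div, le_div_iff₀ (by positivity)] at h3
    linarith
  have hA : 2 * β * κ * (h p - h xbar) + 2 * inner ℝ (z - p) (xbar - p) ≤ 0 := by
    by_contra! hc
    set A := 2 * β * κ * (h p - h xbar) + 2 * inner ℝ (z - p) (xbar - p)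
    have hB : 0 ≤ ‖xbar - p‖ ^ 2 := by positivity
    set B := ‖xbar - p‖ ^ 2
    have hAB : 0 < A + B := by linarith
    have hl : 0 < A / (A + B) := by positivity
    have := key (A / (A + B)) ⟨hl.le, by rw [div_le_one hAB]; linarith⟩
    have := le_of_mul_le_mul_left this hl
    rw [div_mul_eq_mul_div, le_div_iff₀ hAB] at this
    nlinarith
  have e : z - xbar = (z - p) - (xbar - p) := by abel
  rw [e, norm_sub_sq_real (z - p) (xbar - p), norm_sub_rev p xbar]
  nlinarith [sq_nonneg ‖z - p‖]

theorem stmt_19 {n : ℕ} (h : EuclideanSpace ℝ (Fin n) → ℝ)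
    (hlsc : LowerSemicontinuous h)
    (κ : ℝ) (hκ : κ ∈ Ioc (0:ℝ) 1)
    (xbar : EuclideanSpace ℝ (Fin n)) (hxbar : ∀ y, h xbar ≤ h y)
    (hq : QuasarConvex h κ xbar)
    (β : ℕ → ℝ) (β' : ℝ) (hβ' : 0 < β') (hβ : ∀ k, β' ≤ β k)
    (x : ℕ → EuclideanSpace ℝ (Fin n))
    (hiter : ∀ k : ℕ, x (k + 1) ∈ Prox (β k) h (x k)) :
    ∀ N : ℕ, 1 ≤ N → h (x N) - h xbar ≤ ‖x 0 - xbar‖ ^ 2 / (2 * κ * β' * N) := by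
  obtain ⟨hκ0, hκ1⟩ := hκ
  have hpos : ∀ k, 0 < β k := fun k => hβ'.trans_le (hβ k)
  have main : ∀ N : ℕ, 2 * κ * β' * N * (h (x N) - h xbar)
      ≤ ‖x 0 - xbar‖ ^ 2 - ‖x N - xbar‖ ^ 2 := by
    intro N
    induction N with
    | zero => simp
    | succ N ih =>
      have h1 := prox_step h κ xbar hq (β N) (hpos N) _ _ (hiter N)
      have h2 : h (x (N + 1)) ≤ h (x N) := by
        have h3 := hiter N (x N)
        have h4 : 0 ≤ 1 / (2 * β N) * ‖x N - x (N + 1)‖ ^ 2 := by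
          have := hpos N
          positivity
        simp only [sub_self, norm_zero] at h3
        linarith
      have h5 : 2 * κ * β' * N * (h (x (N + 1)) - h xbar)
          ≤ 2 * κ * β' * N * (h (x N) - h xbar) := by gcongr
      have h6 : β' * (κ * (h (x (N + 1)) - h xbar)) ≤ β N * (κ * (h (x (N + 1)) - h xbar)) :=
        mul_le_mul_of_nonneg_right (hβ N) (mul_nonneg hκ0.le (sub_nonneg.2 (hxbar _)))
      push_cast
      linarith
  intro N hN
  have hN' : (0:ℝ) < N := by exact_mod_cast hN
  rw [le_div_iff₀ (by positivity)]
  nlinarith [main N, sq_nonneg ‖x N - xbar‖]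
end
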